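/- Let θ ∈ (0, 1/2) and q ∈ [0, 1/2). Let P = P_{T,θ} on {0,1}³ for the tree T with edge set {{1,2},{2,3}}, let P^{(q)} be its noisy version, and let y_1,…,y_n be i.i.d. samples from P^{(q)} with empirical agreement weights Â^{(q)}_{i,j}. The error probability of the maximum-weight spanning tree estimator with uniformly random tie-breaking equals Err_n^{(q)} := ℙ({Â^{(q)}_{1,3} > Â^{(q)}_{1,2}} ∪ {Â^{(q)}_{1,3} > Â^{(q)}_{2,3}}) + (1/2)·ℙ(Â^{(q)}_{2,3} > Â^{(q)}_{1,2} = Â^{(q)}_{1,3}) + (1/2)·ℙ(Â^{(q)}_{1,2} > Â^{(q)}_{2,3} = Â^{(q)}_{1,3}) + (2/3)·ℙ(Â^{(q)}_{1,2} = Â^{(q)}_{2,3} = Â^{(q)}_{1,3}), and it satisfies Err_n^{(q)} = (2f^{(q)}(n) − f̃^{(q)}(n))·(1 + o(n^{−1})); that is, n·( Err_n^{(q)} / (2f^{(q)}(n) − f̃^{(q)}(n)) − 1 ) → 0 as n → ∞. -/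

import Mathlib

open scoped Classical BigOperators
open Filter

noncomputable section

/-- Symmetric pair weight `w(x i, x j)` lifted to unordered pairs. -/
def pairWeight (θ : ℝ) {p : ℕ} (x : Fin p → Bool) : Sym2 (Fin p) → ℝ :=
  Sym2.lift ⟨fun i j => if x i = x j then 1 - θ else θ, fun i j => by
    dsimp only
    by_cases h : x i = x j
    · rw [if_pos h, if_pos h.symm]
    · rw [if_neg h, if_neg (fun hh => h hh.symm)]⟩

/-- The homogeneous zero-external-field Ising tree distribution. -/
def isingP (θ : ℝ) {p : ℕ} (T : SimpleGraph (Fin p)) (x : Fin p → Bool) : ℝ :=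
  (1 / 2) * ∏ e ∈ T.edgeFinset, pairWeight θ x e

/-- Probability of an event `A` about `n` i.i.d. samples from pmf `P`. -/
def iidProb {p : ℕ} (P : (Fin p → Bool) → ℝ) (n : ℕ)
    (A : Set (Fin n → Fin p → Bool)) : ℝ :=
  ∑ xs : Fin n → Fin p → Bool, if xs ∈ A then ∏ k, P (xs k) else 0

/-- Empirical agreement weight. -/
def Ahat {p n : ℕ} (xs : Fin n → Fin p → Bool) (i j : Fin p) : ℝ :=
  ((Finset.univ.filter (fun k : Fin n => xs k i = xs k j)).card : ℝ) / n

/-- Empirical agreement weight on unordered pairs. -/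
def AhatSym {p n : ℕ} (xs : Fin n → Fin p → Bool) : Sym2 (Fin p) → ℝ :=
  Sym2.lift ⟨fun i j => Ahat xs i j, fun i j => by
    have h : (Finset.univ.filter fun k : Fin n => xs k i = xs k j)
        = (Finset.univ.filter fun k : Fin n => xs k j = xs k i) :=
      Finset.filter_congr (fun k _ => ⟨Eq.symm, Eq.symm⟩)
    simp only [Ahat, h]⟩

/-- The path (Markov chain) tree on 3 nodes with edges {1,2},{2,3}. -/
def chainA : SimpleGraph (Fin 3) := SimpleGraph.fromEdgeSet {s(0,1), s(1,2)}

def chainB : SimpleGraph (Fin 3) := SimpleGraph.fromEdgeSet {s(0,2), s(1,2)}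

def chainC : SimpleGraph (Fin 3) := SimpleGraph.fromEdgeSet {s(0,1), s(0,2)}

def path4 : SimpleGraph (Fin 4) := SimpleGraph.fromEdgeSet {s(0,1), s(1,2), s(2,3)}

def Kexp (θ : ℝ) : ℝ := -Real.log (1 - θ * (1 - Real.sqrt (4 * θ * (1 - θ))))

def sigmaSq (θ : ℝ) : ℝ := θ * Real.sqrt (4 * θ * (1 - θ)) * Real.exp (Kexp θ)

def zTheta (θ : ℝ) : ℝ := Real.sqrt (θ / (1 - θ))

def ftilde (θ : ℝ) (n : ℕ) : ℝ :=
  Real.exp (-(n : ℝ) * Kexp θ) / Real.sqrt (2 * Real.pi * sigmaSq θ * n)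
    * (1 + (1 - 3 * sigmaSq θ) / (8 * sigmaSq θ * n))

def fn (θ : ℝ) (n : ℕ) : ℝ :=
  ftilde θ n / (1 - zTheta θ)
    * (1 - zTheta θ * (1 + zTheta θ) / (2 * (1 - zTheta θ) ^ 2 * sigmaSq θ * n))

/-- Hamming distance. -/
def hamming {p : ℕ} (x y : Fin p → Bool) : ℕ :=
  (Finset.univ.filter (fun i => x i ≠ y i)).card

/-- Noisy (BSC with crossover probability q) version of a distribution. -/
def noisy (q : ℝ) {p : ℕ} (P : (Fin p → Bool) → ℝ) (y : Fin p → Bool) : ℝ :=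
  ∑ x : Fin p → Bool, q ^ hamming x y * (1 - q) ^ (p - hamming x y) * P x

def beta1 (θ q : ℝ) : ℝ :=
  ((1 - q) ^ 3 + q ^ 3) * (θ * (1 - θ) / 2) + q * (1 - q) * ((1 - θ * (1 - θ)) / 2)

def beta2 (θ q : ℝ) : ℝ :=
  ((1 - q) ^ 3 + q ^ 3) * (θ ^ 2 / 2) + q * (1 - q) * ((1 - θ ^ 2) / 2)

def Kq (θ q : ℝ) : ℝ :=
  -Real.log (1 - 4 * ((beta1 θ q + beta2 θ q) / 2 - Real.sqrt (beta1 θ q * beta2 θ q)))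

def mu2 (θ q : ℝ) : ℝ := 4 * Real.sqrt (beta1 θ q * beta2 θ q) * Real.exp (Kq θ q)

def zq (θ q : ℝ) : ℝ := Real.sqrt (beta2 θ q / beta1 θ q)

def ftildeq (θ q : ℝ) (n : ℕ) : ℝ :=
  Real.exp (-(n : ℝ) * Kq θ q) / Real.sqrt (2 * Real.pi * mu2 θ q * n)
    * (1 + (1 - 3 * mu2 θ q) / (8 * mu2 θ q * n))

def fnq (θ q : ℝ) (n : ℕ) : ℝ :=
  ftildeq θ q n / (1 - zq θ q)
    * (1 - zq θ q * (1 + zq θ q) / (2 * (1 - zq θ q) ^ 2 * mu2 θ q * n))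

/-- Marginal of a pmf on `{0,1}^p` on a single coordinate. -/
def marg1 {p : ℕ} (Q : (Fin p → Bool) → ℝ) (i : Fin p) (a : Bool) : ℝ :=
  ∑ x ∈ Finset.univ.filter (fun x : Fin p → Bool => x i = a), Q x

/-- Marginal of a pmf on `{0,1}^p` on a pair of coordinates. -/
def marg2 {p : ℕ} (Q : (Fin p → Bool) → ℝ) (i j : Fin p) (a b : Bool) : ℝ :=
  ∑ x ∈ Finset.univ.filter (fun x : Fin p → Bool => x i = a ∧ x j = b), Q x

/-- Kullback-Leibler divergence between pmfs on a finite type. -/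
def klDiv {X : Type*} [Fintype X] (Q P : X → ℝ) : ℝ :=
  ∑ x : X, Q x * Real.log (Q x / P x)

/-- Empirical mutual information between coordinates `i` and `j`. -/
def mutInf {p : ℕ} (Q : (Fin p → Bool) → ℝ) (i j : Fin p) : ℝ :=
  ∑ a : Bool, ∑ b : Bool,
    marg2 Q i j a b * Real.log (marg2 Q i j a b / (marg1 Q i a * marg1 Q j b))

end

/-- The error probability of the MWST estimator with uniformly random tie-breaking
for the 3-node chain, from `n` noisy samples. -/
noncomputable def ErrProbQ (θ q : ℝ) (n : ℕ) : ℝ :=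
  iidProb (noisy q (isingP θ chainA)) n
      {ys | Ahat ys 0 1 < Ahat ys 0 2 ∨ Ahat ys 1 2 < Ahat ys 0 2}
    + (1 / 2) * iidProb (noisy q (isingP θ chainA)) n
      {ys | Ahat ys 0 1 < Ahat ys 1 2 ∧ Ahat ys 0 1 = Ahat ys 0 2}
    + (1 / 2) * iidProb (noisy q (isingP θ chainA)) n
      {ys | Ahat ys 1 2 < Ahat ys 0 1 ∧ Ahat ys 1 2 = Ahat ys 0 2}
    + (2 / 3) * iidProb (noisy q (isingP θ chainA)) n
      {ys | Ahat ys 0 1 = Ahat ys 1 2 ∧ Ahat ys 1 2 = Ahat ys 0 2}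

theorem aux_u_bound (t : ℝ) (ht : |t| ≤ 1) :
    |(1 - Real.cos t) - (t^2/2 - t^4/24)| ≤ |t|^5 := by
  have h1 : 1 - Real.cos t = 2 * Real.sin (t/2)^2 := by
    have := Real.cos_two_mul' (t/2)
    rw [show 2 * (t/2) = t by ring] at this
    have h := Real.sin_sq_add_cos_sq (t/2)
    linarith
  set a := t/2 with ha
  have hta : t = 2 * a := by rw [ha]; ring
  have ha1 : |a| ≤ 1/2 := by rw [ha, abs_div]; norm_num; linarith
  have hb := Real.sin_bound (x := a) (by linarith)
  rw [h1]
  set s := Real.sin a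
  have hs : |s| ≤ 1 := Real.abs_sin_le_one a
  have ha0 := abs_nonneg a
  have e : 2 * s^2 - (t^2/2 - t^4/24) = 2 * ((s - (a - a^3/6)) * (s + (a - a^3/6))) + a^6/18 := by
    rw [hta]; ring
  rw [e]
  have hp : |a - a^3/6| ≤ 1 := by
    have := abs_sub a (a^3/6)
    have h3 : |a^3/6| ≤ 1/6 := by
      rw [abs_div, abs_pow]; norm_num
      have : |a|^3 ≤ 1 := pow_le_one₀ ha0 (by linarith)
      linarith
    linarith
  have h5 : 0 ≤ |a|^5 := by positivity
  have hsp : |s + (a - a^3/6)| ≤ 2 := (abs_add_le _ _).trans (by linarith)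
  have h6 : |a^6/18| ≤ |a|^5 / 36 := by
    rw [abs_div, abs_pow]; norm_num
    have : |a|^6 = |a|^5 * |a| := by ring
    rw [this]; nlinarith
  have ht5 : |t|^5 = 32 * |a|^5 := by rw [hta, abs_mul]; norm_num; ring
  rw [ht5]
  refine (abs_add_le _ _).trans ?_
  rw [abs_mul, abs_mul]
  have : |s - (a - a^3/6)| * |s + (a - a^3/6)| ≤ |a|^5/100 * 2 := by
    gcongr
  norm_num
  nlinarith

theorem aux_phi_exp (μ t : ℝ) (h0 : 0 < μ) (h1 : μ < 1) :
    |(1 - μ + μ * Real.cos t) - Real.exp (-μ * t^2/2)| ≤ 2 * t^4 := by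
  rcases le_total |t| 1 with ht | ht
  · have hc := Real.cos_bound ht
    have t2 : t^2 ≤ 1 := by rw [← sq_abs]; exact pow_le_one₀ (abs_nonneg _) ht
    have hx : |(-μ * t^2/2)| ≤ 1 := by
      rw [abs_le]; constructor <;> nlinarith [sq_nonneg t]
    have he := Real.abs_exp_sub_one_sub_id_le hx
    have t4 : |t|^4 = t^4 := by rw [← abs_pow]; exact abs_of_nonneg (by positivity)
    rw [t4] at hc
    have hcm : |μ * (Real.cos t - (1 - t^2/2))| ≤ t^4 * (5/96) := by
      rw [abs_mul, abs_of_pos h0]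
      nlinarith [abs_nonneg (Real.cos t - (1 - t^2/2))]
    have hsq : (-μ * t^2/2)^2 ≤ t^4 := by
      have : (-μ * t^2/2)^2 = μ^2 / 4 * t^4 := by ring
      rw [this]
      have : 0 ≤ t^4 := by positivity
      have : μ^2/4 ≤ 1 := by nlinarith
      nlinarith
    have e : (1 - μ + μ * Real.cos t) - Real.exp (-μ * t^2/2) = μ * (Real.cos t - (1 - t^2/2)) - (Real.exp (-μ * t^2/2) - 1 - -μ * t^2/2) := by ring
    rw [e]
    refine (abs_sub _ _).trans ?_
    have : 0 ≤ t^4 := by positivity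
    linarith
  · have t4 : 1 ≤ t^4 := by
      have : t^4 = |t|^4 := by rw [← abs_pow]; exact (abs_of_nonneg (by positivity)).symm
      rw [this]; exact one_le_pow₀ ht
    have e1 : Real.exp (-μ * t^2/2) ≤ 1 := by
      rw [Real.exp_le_one_iff]; nlinarith [sq_nonneg t]
    have e0 := Real.exp_pos (-μ * t^2/2)
    have := Real.cos_le_one t
    have := Real.neg_one_le_cos t
    rw [abs_le]; constructor <;> nlinarith

theorem aux_phi_le (μ t : ℝ) (h0 : 0 < μ) (h1 : μ < 1) (ht : |t| ≤ Real.pi) :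
    |1 - μ + μ * Real.cos t| ≤ Real.exp (-(2*μ*(1-μ)/Real.pi^2) * t^2) := by
  have hpi := Real.pi_pos
  have hc := Real.cos_le_one_sub_mul_cos_sq ht
  have hp2 : 0 < Real.pi^2 := by positivity
  have ht2 : t^2 ≤ Real.pi^2 := by rw [← sq_abs]; exact pow_le_pow_left₀ (abs_nonneg _) ht 2
  set r := t^2/Real.pi^2 with hr
  have hr0 : 0 ≤ r := by positivity
  have hr1 : r ≤ 1 := by rw [hr, div_le_one hp2]; exact ht2
  have e1 : 2 / Real.pi^2 * t^2 = 2 * r := by rw [hr]; ring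
  have e2 : -(2*μ*(1-μ)/Real.pi^2) * t^2 = -(2*μ*(1-μ)*r) := by rw [hr]; ring
  rw [e1] at hc
  rw [e2]
  have he := Real.add_one_le_exp (-(2*μ*(1-μ)*r))
  have hcm := Real.neg_one_le_cos t
  have hmr : 0 ≤ μ * r := by positivity
  have : 2*μ*(1-μ)*r ≤ 2 * (μ * r) := by nlinarith
  have : 2*μ*(1-μ)*r ≤ 2 * (1 - μ) := by
    have : μ * r ≤ 1 := by nlinarith
    nlinarith
  rw [abs_le]; constructor
  · nlinarith
  · nlinarith

theorem aux_exp_le (μ t : ℝ) (h0 : 0 < μ) (h1 : μ < 1) :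
    Real.exp (-μ * t^2/2) ≤ Real.exp (-(2*μ*(1-μ)/Real.pi^2) * t^2) := by
  apply Real.exp_le_exp.2
  have hp : 9 ≤ Real.pi^2 := by nlinarith [Real.pi_gt_three]
  have : 2*μ*(1-μ)/Real.pi^2 ≤ μ/2 := by
    rw [div_le_iff₀ (by positivity)]; nlinarith
  nlinarith [sq_nonneg t]

/-- n (n u_n - x²/2) → -x⁴/24 -/
theorem aux_u_lim (x : ℝ) : Tendsto (fun n : ℕ => (n:ℝ) * ((n:ℝ) * (1 - Real.cos (x / √(n:ℝ))) - x^2/2))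
    atTop (nhds (-x^4/24)) := by
  have hs : Tendsto (fun n : ℕ => x / √(n:ℝ)) atTop (nhds 0) :=
    tendsto_const_nhds.div_atTop (Real.tendsto_sqrt_atTop.comp tendsto_natCast_atTop_atTop)
  have hs' : Tendsto (fun n : ℕ => |x / √(n:ℝ)|) atTop (nhds 0) := by
    simpa using hs.abs
  rw [tendsto_iff_norm_sub_tendsto_zero]
  have hb : Tendsto (fun n : ℕ => x^4 * |x / √(n:ℝ)|) atTop (nhds 0) := by
    simpa using hs'.const_mul (x^4)
  refine squeeze_zero' (Eventually.of_forall fun n => norm_nonneg _) ?_ hb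
  filter_upwards [hs'.eventually (Iic_mem_nhds (zero_lt_one)), eventually_ge_atTop 1] with n hn hn1
  have hn0 : (0:ℝ) < n := by exact_mod_cast hn1
  have hsq : √(n:ℝ)^2 = n := Real.sq_sqrt hn0.le
  have hsp : 0 < √(n:ℝ) := Real.sqrt_pos.2 hn0
  have h := aux_u_bound _ hn
  set t := x / √(n:ℝ) with ht
  have hx : x = t * √(n:ℝ) := by rw [ht]; field_simp
  have hx2 : x^2 = t^2 * n := by rw [hx, mul_pow, hsq]
  have hx4 : x^4 = t^4 * n^2 := by rw [show x^4 = (x^2)^2 by ring, hx2]; ring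
  have e : (n:ℝ) * ((n:ℝ) * (1 - Real.cos t) - x^2/2) - -x^4/24 = n^2 * ((1 - Real.cos t) - (t^2/2 - t^4/24)) := by
    rw [neg_div, hx2, hx4]; ring
  rw [e, Real.norm_eq_abs, abs_mul, abs_of_pos (by positivity : (0:ℝ) < (n:ℝ)^2), hx4]
  have t4 : t^4 = |t|^4 := by rw [← abs_pow]; exact (abs_of_nonneg (by positivity)).symm
  rw [t4] at h ⊢
  calc (n:ℝ)^2 * _ ≤ (n:ℝ)^2 * |t|^5 := by gcongr
    _ = _ := by ring

theorem inv_nat_lim : Tendsto (fun n : ℕ => (1:ℝ)/(n:ℝ)) atTop (nhds 0) :=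
  tendsto_one_div_atTop_nhds_zero_nat

theorem lim_of_mul (a : ℕ → ℝ) (L : ℝ) (h : Tendsto (fun n : ℕ => (n:ℝ) * a n) atTop (nhds L)) :
    Tendsto a atTop (nhds 0) := by
  have := inv_nat_lim.mul h
  rw [zero_mul] at this
  refine this.congr' ?_
  filter_upwards [eventually_ge_atTop 1] with n hn
  have hn0 : (0:ℝ) < n := by exact_mod_cast hn
  field_simp

/-- n u_n → x²/2 -/
theorem aux_u_lim1 (x : ℝ) : Tendsto (fun n : ℕ => (n:ℝ) * (1 - Real.cos (x / √(n:ℝ))))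
    atTop (nhds (x^2/2)) := by
  have := (lim_of_mul _ _ (aux_u_lim x)).add_const (x^2/2)
  simpa using this

theorem aux_u_lim0 (x : ℝ) : Tendsto (fun n : ℕ => (1 - Real.cos (x / √(n:ℝ))))
    atTop (nhds 0) := lim_of_mul _ _ (aux_u_lim1 x)

theorem aux_log_lim (μ x : ℝ) :
    Tendsto (fun n : ℕ => (n:ℝ) * ((n:ℝ) * Real.log (1 - μ * (1 - Real.cos (x / √(n:ℝ)))) + μ * x^2/2))
    atTop (nhds ((μ/24 - μ^2/8) * x^4)) := by
  have h2 := aux_u_lim x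
  have h1 := aux_u_lim1 x
  have h0 := aux_u_lim0 x
  set u : ℕ → ℝ := fun n => 1 - Real.cos (x / √(n:ℝ)) with hu
  change Tendsto (fun n : ℕ => (n:ℝ) * ((n:ℝ) * u n - x^2/2)) _ _ at h2
  change Tendsto (fun n : ℕ => (n:ℝ) * u n) _ _ at h1
  change Tendsto (fun n : ℕ => (n:ℝ) * ((n:ℝ) * Real.log (1 - μ * u n) + μ * x^2/2)) _ _
  have hv : Tendsto (fun n => |μ * u n|) atTop (nhds 0) := by simpa using (h0.const_mul μ).abs
  have hr : Tendsto (fun n : ℕ => (n:ℝ)^2 * (Real.log (1 - μ * u n) + μ * u n + (μ * u n)^2/2)) atTop (nhds 0) := by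
    rw [tendsto_zero_iff_norm_tendsto_zero]
    have hb : Tendsto (fun n : ℕ => (μ * ((n:ℝ) * u n))^2 * (|μ * u n| / (1 - |μ * u n|))) atTop (nhds 0) := by
      have := ((h1.const_mul μ).pow 2).mul (hv.div (hv.const_sub 1) (by norm_num))
      simpa using this
    refine squeeze_zero' (Eventually.of_forall fun n => norm_nonneg _) ?_ hb
    filter_upwards [hv.eventually (Iio_mem_nhds (zero_lt_one))] with n hn
    have := Real.abs_log_sub_add_sum_range_le hn 2
    rw [Real.norm_eq_abs, abs_mul, abs_of_nonneg (by positivity : (0:ℝ) ≤ (n:ℝ)^2)]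
    simp only [Finset.sum_range_succ, Finset.sum_range_zero] at this
    have e : Real.log (1 - μ * u n) + μ * u n + (μ * u n)^2/2 = 0 + (μ * u n) ^ (0 + 1) / ((0:ℕ) + 1:ℝ) + (μ * u n) ^ (1 + 1) / ((1:ℕ) + 1) + Real.log (1 - μ * u n) := by
      push_cast; ring
    rw [e]
    calc (n:ℝ)^2 * _ ≤ (n:ℝ)^2 * (|μ * u n| ^ (2 + 1) / (1 - |μ * u n|)) := by gcongr
      _ = (n:ℝ)^2 * |μ * u n|^2 * (|μ * u n| / (1 - |μ * u n|)) := by ring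
      _ = _ := by rw [sq_abs]; ring
  have := (hr.sub (h2.const_mul μ)).sub (((h1.const_mul μ).pow 2).div_const 2)
  have e : 0 - μ * (-x^4/24) - (μ * (x^2/2))^2/2 = (μ/24 - μ^2/8) * x^4 := by ring
  rw [e] at this
  refine this.congr fun n => ?_
  ring

theorem aux_exp_lim (w : ℕ → ℝ) (L : ℝ) (h : Tendsto (fun n : ℕ => (n:ℝ) * w n) atTop (nhds L)) :
    Tendsto (fun n : ℕ => (n:ℝ) * (Real.exp (w n) - 1)) atTop (nhds L) := by
  have h0 := lim_of_mul _ _ h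
  have hb : Tendsto (fun n : ℕ => |(n:ℝ) * w n| * |w n|) atTop (nhds 0) := by
    simpa using h.abs.mul h0.abs
  have hr : Tendsto (fun n : ℕ => (n:ℝ) * (Real.exp (w n) - 1 - w n)) atTop (nhds 0) := by
    rw [tendsto_zero_iff_norm_tendsto_zero]
    refine squeeze_zero' (Eventually.of_forall fun n => norm_nonneg _) ?_ hb
    have h0' : Tendsto (fun n => |w n|) atTop (nhds 0) := by simpa using h0.abs
    filter_upwards [h0'.eventually (Iic_mem_nhds (zero_lt_one))] with n hn
    have := Real.abs_exp_sub_one_sub_id_le hn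
    rw [Real.norm_eq_abs, abs_mul, abs_mul, mul_assoc]
    gcongr
    rwa [abs_mul_abs_self, ← sq]
  have := hr.add h
  rw [zero_add] at this
  refine this.congr fun n => ?_
  ring

theorem aux_phi_lim (μ x : ℝ) :
    Tendsto (fun n : ℕ => (n:ℝ) * ((1 - μ + μ * Real.cos (x / √(n:ℝ)))^n - Real.exp (-μ * x^2/2)))
    atTop (nhds (Real.exp (-μ * x^2/2) * ((μ/24 - μ^2/8) * x^4))) := by
  have h := (aux_exp_lim _ _ (aux_log_lim μ x)).const_mul (Real.exp (-μ * x^2/2))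
  refine h.congr' ?_
  have hv : Tendsto (fun n : ℕ => 1 - μ * (1 - Real.cos (x / √(n:ℝ)))) atTop (nhds 1) := by
    simpa using ((aux_u_lim0 x).const_mul μ).const_sub 1
  filter_upwards [hv.eventually (Ioi_mem_nhds zero_lt_one)] with n hn
  have hn : 0 < 1 - μ * (1 - Real.cos (x / √(n:ℝ))) := hn
  have e : 1 - μ + μ * Real.cos (x / √(n:ℝ)) = 1 - μ * (1 - Real.cos (x / √(n:ℝ))) := by ring
  rw [e, Real.exp_add, Real.exp_nat_mul, Real.exp_log hn]
  have e2 : Real.exp (-μ * x^2/2) * Real.exp (μ * x^2/2) = 1 := by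
    rw [← Real.exp_add]; ring_nf; exact Real.exp_zero
  linear_combination (n:ℝ) * (1 - μ * (1 - Real.cos (x / √(n:ℝ))))^n * e2

theorem gint (b : ℝ) (hb : 0 < b) (k : ℕ) :
    MeasureTheory.Integrable (fun x : ℝ => x^k * Real.exp (-b * x^2)) := by
  have := integrable_rpow_mul_exp_neg_mul_sq hb (s := (k:ℝ)) (by linarith [(Nat.cast_nonneg k : (0:ℝ) ≤ k)])
  simpa using this

theorem gmom (b : ℝ) (hb : 0 < b) (k : ℕ) :
    ∫ x : ℝ, x^(k+2) * Real.exp (-b * x^2) = (k+1)/(2*b) * ∫ x : ℝ, x^k * Real.exp (-b * x^2) := by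
  have h := MeasureTheory.integral_mul_deriv_eq_deriv_mul_of_integrable
    (u := fun x : ℝ => x^(k+1)) (v := fun x : ℝ => -(1/(2*b)) * Real.exp (-b * x^2))
    (u' := fun x => (k+1) * x^k) (v' := fun x => x * Real.exp (-b * x^2))
    (fun x _ => by simpa using hasDerivAt_pow (k+1) x)
    (fun x _ => by
      have h1 : HasDerivAt (fun x : ℝ => -b * x^2) (-b * (2 * x)) x := by
        simpa using (hasDerivAt_pow 2 x).const_mul (-b)
      have := h1.exp.const_mul (-(1/(2*b)))
      convert this using 1
      field_simp)
    (by
      convert gint b hb (k+2) using 1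
      ext x; simp only [Pi.mul_apply]; ring)
    (by
      convert (gint b hb k).const_mul ((k+1) * -(1/(2*b))) using 1
      ext x; simp only [Pi.mul_apply]; ring)
    (by
      convert (gint b hb (k+1)).const_mul (-(1/(2*b))) using 1
      ext x; simp only [Pi.mul_apply]; ring)
  have e1 : ∀ x : ℝ, x^(k+1) * (x * Real.exp (-b * x^2)) = x^(k+2) * Real.exp (-b * x^2) := fun x => by ring
  have e2 : ∀ x : ℝ, (k+1) * x^k * (-(1/(2*b)) * Real.exp (-b * x^2)) = -((k+1)/(2*b)) * (x^k * Real.exp (-b * x^2)) := fun x => by ring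
  simp only [e1, e2] at h
  rw [h, MeasureTheory.integral_const_mul]; ring

theorem gmom0 (μ : ℝ) : ∫ x : ℝ, Real.exp (-(μ/2) * x^2) = √(2 * Real.pi / μ) := by
  rw [integral_gaussian]; congr 1; field_simp
theorem gmom2 (μ : ℝ) (h : 0 < μ) : ∫ x : ℝ, x^2 * Real.exp (-(μ/2) * x^2) = 1/μ * √(2 * Real.pi / μ) := by
  have := gmom (μ/2) (by positivity) 0
  simp only [zero_add, pow_zero, one_mul] at this
  rw [this, gmom0]; congr 1; field_simp; simp
theorem gmom4 (μ : ℝ) (h : 0 < μ) : ∫ x : ℝ, x^4 * Real.exp (-(μ/2) * x^2) = 3/μ^2 * √(2 * Real.pi / μ) := by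
  have := gmom (μ/2) (by positivity) 2
  rw [this, gmom2 μ h]; field_simp; norm_num

noncomputable def Hk (z t : ℝ) : ℝ := (1 - z^2) / ((1 - z)^2 + 2 * z * (1 - Real.cos t))
noncomputable def h0 (z : ℝ) : ℝ := (1 + z) / (1 - z)
noncomputable def h2 (z : ℝ) : ℝ := -(z * (1 + z) / (1 - z)^3)
noncomputable def phi (μ t : ℝ) : ℝ := 1 - μ + μ * Real.cos t

theorem Hk_den_pos (z t : ℝ) (hz0 : 0 < z) (hz1 : z < 1) : 0 < (1 - z)^2 + 2 * z * (1 - Real.cos t) := by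
  have := Real.cos_le_one t
  have : 0 < (1-z)^2 := by have : 0 < 1 - z := by linarith
                           positivity
  nlinarith

theorem Hk_sub (z t : ℝ) (hz0 : 0 < z) (hz1 : z < 1) :
    Hk z t - h0 z = -(h0 z * (2 * z) * (1 - Real.cos t) / ((1 - z)^2 + 2 * z * (1 - Real.cos t))) := by
  have := Hk_den_pos z t hz0 hz1
  have h1 : 1 - z ≠ 0 := by linarith
  unfold Hk h0
  rw [eq_neg_iff_add_eq_zero]
  obtain ⟨d, hd⟩ : ∃ d, d = (1 - z)^2 + 2 * z * (1 - Real.cos t) := ⟨_, rfl⟩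
  rw [← hd] at this ⊢
  have hd0 := this.ne'
  field_simp
  rw [hd]
  ring

theorem h0_pos (z : ℝ) (hz0 : 0 < z) (hz1 : z < 1) : 0 < h0 z := by
  unfold h0; apply div_pos <;> linarith

theorem Hk_bd (z t : ℝ) (hz0 : 0 < z) (hz1 : z < 1) :
    |Hk z t - h0 z| ≤ h0 z * (2*z) / (1-z)^2 * t^2 := by
  rw [Hk_sub z t hz0 hz1, abs_neg]
  have hd := Hk_den_pos z t hz0 hz1
  have h1 : 0 < 1 - z := by linarith
  have hc := Real.cos_le_one t
  have hc2 := Real.one_sub_sq_div_two_le_cos (x := t)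
  have hh := h0_pos z hz0 hz1
  rw [abs_of_nonneg (by apply div_nonneg _ hd.le; apply mul_nonneg (by positivity); linarith)]
  calc _ ≤ h0 z * (2*z) * t^2 / (1-z)^2 := by
        have : 0 ≤ 2 * z * (1 - Real.cos t) := mul_nonneg (by positivity) (by linarith)
        gcongr
        · nlinarith
        · linarith
    _ = _ := by ring

theorem Hk_nonneg (z t : ℝ) (hz0 : 0 < z) (hz1 : z < 1) : 0 ≤ Hk z t := by
  have hd := Hk_den_pos z t hz0 hz1
  apply div_nonneg _ hd.le; nlinarith

theorem Hk_le (z t : ℝ) (hz0 : 0 < z) (hz1 : z < 1) : |Hk z t| ≤ h0 z := by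
  rw [abs_of_nonneg (Hk_nonneg z t hz0 hz1)]
  have := Hk_sub z t hz0 hz1
  have hd := Hk_den_pos z t hz0 hz1
  have hc := Real.cos_le_one t
  have : 0 ≤ (h0 z * (2 * z) * (1 - Real.cos t) / ((1 - z)^2 + 2 * z * (1 - Real.cos t))) := by
    have := h0_pos z hz0 hz1
    apply div_nonneg _ hd.le; apply mul_nonneg (by positivity); linarith
  linarith

theorem Hk_cont (z : ℝ) (hz0 : 0 < z) (hz1 : z < 1) : Continuous (Hk z) := by
  unfold Hk
  exact continuous_const.div (by fun_prop) (fun t => (Hk_den_pos z t hz0 hz1).ne')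

theorem phi_cont (μ : ℝ) : Continuous (phi μ) := by unfold phi; fun_prop

theorem Hk_lim (z x : ℝ) (hz0 : 0 < z) (hz1 : z < 1) :
    Tendsto (fun n : ℕ => (n:ℝ) * (Hk z (x / √(n:ℝ)) - h0 z)) atTop (nhds (h2 z * x^2)) := by
  have h1 := aux_u_lim1 x
  have h00 := aux_u_lim0 x
  have hne : 1 - z ≠ 0 := by linarith
  have := ((h1.const_mul (h0 z * (2*z))).div ((h00.const_mul (2*z)).const_add ((1-z)^2))
    (by simpa using hne)).neg
  have e : -(h0 z * (2*z) * (x^2/2) / ((1-z)^2 + 2*z*0)) = h2 z * x^2 := by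
    unfold h0 h2; field_simp; simp; ring
  rw [e] at this
  refine this.congr fun n => ?_
  rw [Hk_sub z _ hz0 hz1]; simp only [Pi.div_apply]; ring

theorem Hk_lim0 (z x : ℝ) (hz0 : 0 < z) (hz1 : z < 1) :
    Tendsto (fun n : ℕ => Hk z (x / √(n:ℝ))) atTop (nhds (h0 z)) := by
  simpa using (lim_of_mul _ _ (Hk_lim z x hz0 hz1)).add_const (h0 z)

/-- pointwise limit -/
theorem ptlim (μ z x : ℝ) (hz0 : 0 < z) (hz1 : z < 1) :
    Tendsto (fun n : ℕ => (n:ℝ) * (phi μ (x / √(n:ℝ))^n * Hk z (x / √(n:ℝ)) - h0 z * Real.exp (-μ * x^2/2)))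
    atTop (nhds (Real.exp (-μ * x^2/2) * (h0 z * (μ/24 - μ^2/8) * x^4 + h2 z * x^2))) := by
  have := ((aux_phi_lim μ x).mul (Hk_lim0 z x hz0 hz1)).add ((Hk_lim z x hz0 hz1).const_mul (Real.exp (-μ * x^2/2)))
  convert this using 2
  · unfold phi; ring
  · ring

noncomputable def Fn (μ z : ℝ) (n : ℕ) (x : ℝ) : ℝ :=
  (n:ℝ) * ((Set.Ioc (-(Real.pi * √(n:ℝ))) (Real.pi * √(n:ℝ))).indicator (fun x => phi μ (x / √(n:ℝ))^n * Hk z (x / √(n:ℝ))) x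
    - h0 z * Real.exp (-μ * x^2/2))

theorem Fn_lim (μ z x : ℝ) (hz0 : 0 < z) (hz1 : z < 1) :
    Tendsto (fun n : ℕ => Fn μ z n x)
    atTop (nhds (Real.exp (-μ * x^2/2) * (h0 z * (μ/24 - μ^2/8) * x^4 + h2 z * x^2))) := by
  refine (ptlim μ z x hz0 hz1).congr' ?_
  have : Tendsto (fun n : ℕ => Real.pi * √(n:ℝ)) atTop atTop :=
    (Real.tendsto_sqrt_atTop.comp tendsto_natCast_atTop_atTop).const_mul_atTop Real.pi_pos
  filter_upwards [this.eventually (eventually_gt_atTop |x|)] with n hn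
  unfold Fn
  rw [Set.indicator_of_mem]
  have := abs_lt.1 hn
  exact ⟨this.1, this.2.le⟩

noncomputable def cc (μ : ℝ) : ℝ := 2*μ*(1-μ)/Real.pi^2

theorem cc_pos (μ : ℝ) (h0 : 0 < μ) (h1 : μ < 1) : 0 < cc μ := by
  unfold cc; have : 0 < 1 - μ := by linarith
  positivity

theorem Fn_bd (μ z : ℝ) (hμ0 : 0 < μ) (hμ1 : μ < 1) (hz0 : 0 < z) (hz1 : z < 1) (n : ℕ) (hn : 2 ≤ n) (x : ℝ) :
    |Fn μ z n x| ≤ (2 * h0 z * x^4 + (h0 z * (2*z) / (1-z)^2 + h0 z) * x^2) * Real.exp (-(cc μ/2) * x^2) := by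
  have hc := cc_pos μ hμ0 hμ1
  have hh := h0_pos z hz0 hz1
  have hn0 : (0:ℝ) < n := by exact_mod_cast (by omega : 0 < n)
  have hn2 : (2:ℝ) ≤ n := by exact_mod_cast hn
  have hsq : √(n:ℝ)^2 = n := Real.sq_sqrt hn0.le
  have hsp : 0 < √(n:ℝ) := Real.sqrt_pos.2 hn0
  have hE : Real.exp (-μ * x^2/2) ≤ Real.exp (-(cc μ/2) * x^2) := by
    refine (aux_exp_le μ x hμ0 hμ1).trans ?_
    apply Real.exp_le_exp.2
    change -(cc μ) * x^2 ≤ _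
    nlinarith [sq_nonneg x]
  have hE0 := Real.exp_pos (-μ * x^2/2)
  have hA : 0 ≤ h0 z * (2*z) / (1-z)^2 := by positivity
  unfold Fn
  rw [abs_mul, abs_of_pos hn0]
  by_cases hx : x ∈ Set.Ioc (-(Real.pi * √(n:ℝ))) (Real.pi * √(n:ℝ))
  · rw [Set.indicator_of_mem hx]
    set t := x / √(n:ℝ) with ht
    have hx' : x = t * √(n:ℝ) := by rw [ht]; field_simp
    have hx2 : x^2 = t^2 * n := by rw [hx', mul_pow, hsq]
    have hx4 : x^4 = t^4 * n^2 := by rw [show x^4 = (x^2)^2 by ring, hx2]; ring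
    have htp : |t| ≤ Real.pi := by
      rw [ht, abs_div, abs_of_pos hsp, div_le_iff₀ hsp, abs_le]
      exact ⟨hx.1.le, hx.2⟩
    have hEn : Real.exp (-μ * x^2/2) = Real.exp (-μ * t^2/2)^n := by
      rw [← Real.exp_nat_mul, hx2]; congr 1; ring
    have e : phi μ t ^ n * Hk z t - h0 z * Real.exp (-μ * x^2/2) =
      (phi μ t ^ n - Real.exp (-μ * t^2/2)^n) * Hk z t + Real.exp (-μ * x^2/2) * (Hk z t - h0 z) := by
      rw [hEn]; ring
    rw [e]
    have b1 : |phi μ t ^ n - Real.exp (-μ * t^2/2)^n| ≤ 2 * t^4 * n * Real.exp (-(cc μ/2) * x^2) := by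
      refine (abs_pow_sub_pow_le _ _ n).trans ?_
      have m : max |phi μ t| |Real.exp (-μ * t^2/2)| ≤ Real.exp (-(cc μ) * t^2) := by
        apply max_le
        · exact aux_phi_le μ t hμ0 hμ1 htp
        · rw [abs_of_pos (Real.exp_pos _)]; exact aux_exp_le μ t hμ0 hμ1
      have m2 : max |phi μ t| |Real.exp (-μ * t^2/2)| ^ (n-1) ≤ Real.exp (-(cc μ/2) * x^2) := by
        refine (pow_le_pow_left₀ (by positivity) m (n-1)).trans ?_
        rw [← Real.exp_nat_mul]
        apply Real.exp_le_exp.2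
        rw [hx2, Nat.cast_sub (by omega)]
        push_cast
        have : 0 ≤ cc μ * t^2 := by positivity
        nlinarith
      have m3 := aux_phi_exp μ t hμ0 hμ1
      have : 0 ≤ 2 * t^4 := by positivity
      gcongr
      exact m3
    have b2 := Hk_le z t hz0 hz1
    have b3 := Hk_bd z t hz0 hz1
    set E := Real.exp (-(cc μ/2) * x^2)
    have hEp : 0 < E := Real.exp_pos _
    calc (n:ℝ) * |_| ≤ n * (|phi μ t ^ n - Real.exp (-μ * t^2/2)^n| * |Hk z t| + Real.exp (-μ * x^2/2) * |Hk z t - h0 z|) := by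
          gcongr
          refine (abs_add_le _ _).trans ?_
          rw [abs_mul, abs_mul, abs_of_pos hE0]
      _ ≤ n * (2 * t^4 * n * E * h0 z + E * (h0 z * (2*z) / (1-z)^2 * t^2)) := by
          gcongr
      _ = (2 * h0 z * x^4 + (h0 z * (2*z) / (1-z)^2) * x^2) * E := by rw [hx4, hx2]; ring
      _ ≤ _ := by
          gcongr
          linarith
  · rw [Set.indicator_of_notMem hx, zero_sub, abs_neg, abs_of_pos (by positivity)]
    have hnx : (n:ℝ) ≤ x^2 := by
      have h1 : Real.pi * √(n:ℝ) ≤ |x| := by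
        by_contra hcon
        push Not at hcon
        have := abs_lt.1 hcon
        exact hx ⟨this.1, this.2.le⟩
      have h2 : √(n:ℝ) ≤ |x| := by nlinarith [Real.pi_gt_three]
      rw [← hsq, ← sq_abs x]
      exact pow_le_pow_left₀ hsp.le h2 2
    have hEp : 0 < Real.exp (-(cc μ/2) * x^2) := Real.exp_pos _
    calc (n:ℝ) * (h0 z * Real.exp (-μ * x^2/2)) ≤ x^2 * (h0 z * Real.exp (-(cc μ/2) * x^2)) := by gcongr
      _ = (0 + (0 + h0 z) * x^2) * Real.exp (-(cc μ/2) * x^2) := by ring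
      _ ≤ _ := by
          gcongr
          positivity

theorem Fn_int_lim (μ z : ℝ) (hμ0 : 0 < μ) (hμ1 : μ < 1) (hz0 : 0 < z) (hz1 : z < 1) :
    Tendsto (fun n : ℕ => ∫ x, Fn μ z n x) atTop
      (nhds (∫ x, Real.exp (-μ * x^2/2) * (h0 z * (μ/24 - μ^2/8) * x^4 + h2 z * x^2))) := by
  refine MeasureTheory.tendsto_integral_filter_of_dominated_convergence
    (fun x => (2 * h0 z * x^4 + (h0 z * (2*z) / (1-z)^2 + h0 z) * x^2) * Real.exp (-(cc μ/2) * x^2)) ?_ ?_ ?_ ?_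
  · refine Eventually.of_forall fun n => Measurable.aestronglyMeasurable ?_
    unfold Fn
    have h1 := (Hk_cont z hz0 hz1).measurable
    have h2 := (phi_cont μ).measurable
    refine measurable_const.mul (Measurable.sub (Measurable.indicator ?_ measurableSet_Ioc) ?_)
    · exact ((h2.comp (measurable_id.div_const _)).pow_const n).mul (h1.comp (measurable_id.div_const _))
    · fun_prop
  · filter_upwards [eventually_ge_atTop 2] with n hn
    exact Eventually.of_forall fun x => Fn_bd μ z hμ0 hμ1 hz0 hz1 n hn x
  · have hb : 0 < cc μ/2 := by have := cc_pos μ hμ0 hμ1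
                               positivity
    have := ((gint _ hb 4).const_mul (2 * h0 z)).add ((gint _ hb 2).const_mul (h0 z * (2*z) / (1-z)^2 + h0 z))
    refine this.congr (Eventually.of_forall fun x => ?_)
    simp only [Pi.add_apply]; ring
  · exact Eventually.of_forall fun x => Fn_lim μ z x hz0 hz1

theorem Fn_int_eq (μ z : ℝ) (hμ0 : 0 < μ) (hz0 : 0 < z) (hz1 : z < 1) (n : ℕ) (hn : 1 ≤ n) :
    ∫ x, Fn μ z n x = n * (√(n:ℝ) * (∫ t in (-Real.pi)..Real.pi, phi μ t ^ n * Hk z t) - h0 z * √(2 * Real.pi / μ)) := by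
  have hn0 : (0:ℝ) < n := by exact_mod_cast hn
  have hsp : 0 < √(n:ℝ) := Real.sqrt_pos.2 hn0
  unfold Fn
  have hcont : Continuous (fun x => phi μ (x / √(n:ℝ))^n * Hk z (x / √(n:ℝ))) :=
    (((phi_cont μ).comp (continuous_id.div_const _)).pow n).mul ((Hk_cont z hz0 hz1).comp (continuous_id.div_const _))
  have hexp : ∀ x : ℝ, Real.exp (-μ * x^2/2) = Real.exp (-(μ/2) * x^2) := fun x => by congr 1; ring
  rw [MeasureTheory.integral_const_mul, MeasureTheory.integral_sub, MeasureTheory.integral_const_mul,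
    MeasureTheory.integral_indicator measurableSet_Ioc]
  · simp only [hexp]
    rw [gmom0, ← intervalIntegral.integral_of_le (by nlinarith [Real.pi_pos]),
      intervalIntegral.integral_comp_div (fun t => phi μ t ^ n * Hk z t) hsp.ne']
    congr 3
    rw [neg_div, mul_div_assoc, div_self hsp.ne', mul_one]
  · rw [MeasureTheory.integrable_indicator_iff measurableSet_Ioc]
    exact (hcont.integrableOn_Icc).mono_set Set.Ioc_subset_Icc_self
  · simp only [hexp]
    exact (integrable_exp_neg_mul_sq (by positivity)).const_mul _

theorem Jn_lim (μ z : ℝ) (hμ0 : 0 < μ) (hμ1 : μ < 1) (hz0 : 0 < z) (hz1 : z < 1) :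
    Tendsto (fun n : ℕ => (n:ℝ) * (√(n:ℝ) * (∫ t in (-Real.pi)..Real.pi, phi μ t ^ n * Hk z t) - h0 z * √(2 * Real.pi / μ)))
      atTop (nhds ((h0 z * (μ/24 - μ^2/8) * (3/μ^2) + h2 z * (1/μ)) * √(2 * Real.pi / μ))) := by
  have h := Fn_int_lim μ z hμ0 hμ1 hz0 hz1
  have e : ∀ x : ℝ, Real.exp (-μ * x^2/2) * (h0 z * (μ/24 - μ^2/8) * x^4 + h2 z * x^2) =
    h0 z * (μ/24 - μ^2/8) * (x^4 * Real.exp (-(μ/2) * x^2)) + h2 z * (x^2 * Real.exp (-(μ/2) * x^2)) := fun x => by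
      rw [show -μ * x^2/2 = -(μ/2) * x^2 by ring]; ring
  simp only [e] at h
  have hb : 0 < μ/2 := by positivity
  rw [MeasureTheory.integral_add ((gint _ hb 4).const_mul _) ((gint _ hb 2).const_mul _),
    MeasureTheory.integral_const_mul, MeasureTheory.integral_const_mul, gmom4 μ hμ0, gmom2 μ hμ0] at h
  convert h.congr' (f₂ := fun n : ℕ => (n:ℝ) * (√(n:ℝ) * (∫ t in (-Real.pi)..Real.pi, phi μ t ^ n * Hk z t) - h0 z * √(2 * Real.pi / μ))) ?_ using 2
  · ring
  · filter_upwards [eventually_ge_atTop 1] with n hn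
    exact Fn_int_eq μ z hμ0 hz0 hz1 n hn

theorem int_cos (j : ℤ) : ∫ t in (-Real.pi)..Real.pi, Real.cos (j * t) = if j = 0 then 2 * Real.pi else 0 := by
  split_ifs with h
  · subst h; simp; ring
  · have hj : (j:ℝ) ≠ 0 := by exact_mod_cast h
    rw [intervalIntegral.integral_comp_mul_left (fun t => Real.cos t) hj, integral_cos]
    have : Real.sin (j * Real.pi) = 0 := Real.sin_int_mul_pi j
    simp [this]

theorem hasSum_cos (z t : ℝ) (hz0 : 0 < z) (hz1 : z < 1) :
    HasSum (fun m : ℕ => z^m * Real.cos (m * t)) ((Hk z t + 1)/2) := by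
  have hn : ‖(z:ℂ) * Complex.exp (t * Complex.I)‖ < 1 := by
    rw [norm_mul, Complex.norm_exp_ofReal_mul_I, Complex.norm_real, Real.norm_eq_abs, abs_of_pos hz0]; simpa
  have h := Complex.hasSum_re (hasSum_geometric_of_norm_lt_one hn)
  convert h using 1
  · ext m
    rw [mul_pow, ← Complex.exp_nat_mul, ← mul_assoc, ← Complex.ofReal_natCast, ← Complex.ofReal_mul, ← Complex.ofReal_pow,
      Complex.re_ofReal_mul, Complex.exp_ofReal_mul_I_re]
  · have hd := Hk_den_pos z t hz0 hz1
    rw [Complex.inv_re]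
    have e1 : (1 - (z:ℂ) * Complex.exp (t * Complex.I)).re = 1 - z * Real.cos t := by
      rw [Complex.sub_re, Complex.re_ofReal_mul, Complex.exp_ofReal_mul_I_re]; simp
    have e2 : (1 - (z:ℂ) * Complex.exp (t * Complex.I)).im = - (z * Real.sin t) := by
      rw [Complex.sub_im, Complex.im_ofReal_mul, Complex.exp_ofReal_mul_I_im]; simp
    rw [Complex.normSq_apply, e1, e2]
    have e3 : (1 - z * Real.cos t) * (1 - z * Real.cos t) + -(z * Real.sin t) * -(z * Real.sin t) = (1 - z)^2 + 2 * z * (1 - Real.cos t) := by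
      linear_combination z^2 * Real.sin_sq_add_cos_sq t
    rw [e3]
    unfold Hk
    obtain ⟨d, hdd⟩ : ∃ d, d = (1 - z)^2 + 2 * z * (1 - Real.cos t) := ⟨_, rfl⟩
    rw [← hdd] at hd ⊢
    have := hd.ne'
    field_simp
    rw [hdd]; ring

theorem int_cos_Hk_nat (z : ℝ) (hz0 : 0 < z) (hz1 : z < 1) (k : ℕ) :
    ∫ t in (-Real.pi)..Real.pi, Real.cos (k * t) * Hk z t = 2 * Real.pi * z^k := by
  have hc : Continuous (fun t => Real.cos (k * t)) := by fun_prop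
  have hH := Hk_cont z hz0 hz1
  have hs : HasSum (fun m : ℕ => ∫ t in (-Real.pi)..Real.pi, Real.cos (k*t) * (z^m * Real.cos (m * t)))
      (∫ t in (-Real.pi)..Real.pi, Real.cos (k*t) * ((Hk z t + 1)/2)) := by
    refine intervalIntegral.hasSum_integral_of_dominated_convergence (fun m _ => z^m) ?_ ?_ ?_ ?_ ?_
    · intro m; exact (by fun_prop : Continuous _).aestronglyMeasurable
    · intro m
      refine Eventually.of_forall fun t _ => ?_
      rw [norm_mul, norm_mul, norm_pow, Real.norm_eq_abs, Real.norm_eq_abs, Real.norm_eq_abs, abs_of_pos hz0]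
      have h1 := Real.abs_cos_le_one (k*t)
      have h2 := Real.abs_cos_le_one (m*t)
      have : 0 < z^m := by positivity
      calc _ ≤ 1 * (z^m * 1) := by gcongr
        _ = _ := by ring
    · exact Eventually.of_forall fun t _ => summable_geometric_of_lt_one hz0.le hz1
    · exact intervalIntegrable_const
    · exact Eventually.of_forall fun t _ => (hasSum_cos z t hz0 hz1).mul_left _
  have hterm : ∀ m : ℕ, ∫ t in (-Real.pi)..Real.pi, Real.cos (k*t) * (z^m * Real.cos (m * t)) =
      (if m = k then Real.pi * z^k else 0) + (if m = 0 then (if k = 0 then Real.pi else 0) else 0) := by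
    intro m
    have e : ∀ t : ℝ, Real.cos (k*t) * (z^m * Real.cos (m * t)) =
      z^m/2 * (Real.cos (((k:ℤ) - (m:ℤ) : ℤ) * t) + Real.cos (((k:ℤ) + (m:ℤ) : ℤ) * t)) := by
      intro t
      push_cast
      rw [sub_mul, add_mul, Real.cos_sub, Real.cos_add]; ring
    simp only [e]
    rw [intervalIntegral.integral_const_mul, intervalIntegral.integral_add, int_cos, int_cos]
    · by_cases hm : m = 0
      · subst hm
        by_cases hk : k = 0
        · subst hk; simp; ring
        · simp [hk, Ne.symm hk]
      · by_cases hk : m = k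
        · subst hk
          have : ¬ ((m:ℤ) + m = 0) := by omega
          simp [hm]; ring
        · have h1 : ¬ ((k:ℤ) - m = 0) := by omega
          have h2 : ¬ ((k:ℤ) + m = 0) := by omega
          simp only [h1, h2, hm, hk, if_false]; ring
    · exact (by fun_prop : Continuous _).intervalIntegrable _ _
    · exact (by fun_prop : Continuous _).intervalIntegrable _ _
  simp only [hterm] at hs
  have hs2 := (hasSum_ite_eq k (Real.pi * z^k)).add (hasSum_ite_eq 0 (if k = 0 then Real.pi else 0))
  have := hs.unique hs2
  have e : ∀ t, Real.cos (k*t) * ((Hk z t + 1)/2) = 1/2 * (Real.cos (k*t) * Hk z t + Real.cos (((k:ℕ):ℤ)*t)) := fun t => by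
    push_cast; ring
  simp only [e] at this
  rw [intervalIntegral.integral_const_mul, intervalIntegral.integral_add, int_cos] at this
  · by_cases hk : k = 0
    · subst hk; simp at this ⊢; linarith
    · simp [hk] at this; linarith
  · exact (hc.mul hH).intervalIntegrable _ _
  · exact (by fun_prop : Continuous _).intervalIntegrable _ _

theorem int_cos_Hk (z : ℝ) (hz0 : 0 < z) (hz1 : z < 1) (k : ℤ) :
    ∫ t in (-Real.pi)..Real.pi, Real.cos (k * t) * Hk z t = 2 * Real.pi * z^k.natAbs := by
  obtain ⟨m, rfl | rfl⟩ := Int.eq_nat_or_neg k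
  · simpa using int_cos_Hk_nat z hz0 hz1 m
  · simpa using int_cos_Hk_nat z hz0 hz1 m

theorem gen_cos {Y : Type*} [Fintype Y] (w : Y → ℝ) (d : Y → ℤ) (t : ℝ) (n : ℕ)
    (hs : ∑ y, w y * Real.sin (d y * t) = 0) :
    ∑ ys : Fin n → Y, (∏ k, w (ys k)) * Real.cos ((∑ k, d (ys k) : ℤ) * t) = (∑ y, w y * Real.cos (d y * t))^n := by
  have h := Fintype.sum_pow (fun y => (w y : ℂ) * Complex.exp (((d y * t : ℝ) : ℂ) * Complex.I)) n
  have e : ∑ y, (w y : ℂ) * Complex.exp (((d y * t : ℝ) : ℂ) * Complex.I) = ((∑ y, w y * Real.cos (d y * t) : ℝ) : ℂ) := by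
    apply Complex.ext
    · rw [Complex.re_sum, Complex.ofReal_re]
      refine Finset.sum_congr rfl fun y _ => ?_
      rw [Complex.re_ofReal_mul, Complex.exp_ofReal_mul_I_re]
    · rw [Complex.im_sum, Complex.ofReal_im, ← hs]
      refine Finset.sum_congr rfl fun y _ => ?_
      rw [Complex.im_ofReal_mul, Complex.exp_ofReal_mul_I_im]
  rw [e, ← Complex.ofReal_pow] at h
  have h2 := congrArg Complex.re h
  rw [Complex.ofReal_re, Complex.re_sum] at h2
  rw [h2]
  refine Finset.sum_congr rfl fun ys _ => ?_
  rw [Finset.prod_mul_distrib, ← Complex.exp_sum, ← Complex.ofReal_prod, ← Finset.sum_mul, ← Complex.ofReal_sum,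
    Complex.re_ofReal_mul, Complex.exp_ofReal_mul_I_re, ← Finset.sum_mul]
  push_cast; rfl

noncomputable def Vf (d : ℤ) : ℝ := if 0 < d then 1 else if d = 0 then 1/2 else 0

theorem Vf_sym (z : ℝ) (hz : 0 < z) (D : ℤ) : z^D * Vf D + z^(-D) * Vf (-D) = z^D.natAbs := by
  unfold Vf
  rcases lt_trichotomy D 0 with h | h | h
  · obtain ⟨m, rfl | rfl⟩ := Int.eq_nat_or_neg D
    · omega
    · simp only [Left.neg_pos_iff, neg_neg, Int.natAbs_neg, Int.natAbs_natCast]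
      have h1 : (0:ℤ) < m := by omega
      have h2 : ¬ ((m:ℤ) < 0) := by omega
      have h3 : ¬ (-(m:ℤ) = 0) := by omega
      simp only [h1, h2, h3, if_true, if_false]; simp
  · subst h; norm_num
  · obtain ⟨m, rfl | rfl⟩ := Int.eq_nat_or_neg D
    · have h2 : ¬ (0 < -(m:ℤ)) := by omega
      have h3 : ¬ (-(m:ℤ) = 0) := by omega
      simp only [h, h2, h3, if_true, if_false]; simp
    · omega

theorem gen_EV {Y : Type*} [Fintype Y] (P : Y → ℝ) (d : Y → ℤ) (σ : Y ≃ Y) (z : ℝ) (hz0 : 0 < z) (hz1 : z < 1)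
    (hd : ∀ y, d (σ y) = - d y) (hP : ∀ y, P (σ y) * z^(d y) = P y * z^(-d y)) (n : ℕ) :
    2 * ∑ ys : Fin n → Y, (∏ k, P (ys k)) * Vf (∑ k, d (ys k)) =
     1/(2 * Real.pi) * ∫ t in (-Real.pi)..Real.pi, (∑ y, P y * z^(-d y) * Real.cos (d y * t))^n * Hk z t := by
  set w : Y → ℝ := fun y => P y * z^(-d y) with hw
  have hwσ : ∀ y, w (σ y) = w y := fun y => by simp only [hw, hd, neg_neg]; exact hP y
  have hzne := hz0.ne'
  have hPw : ∀ ys : Fin n → Y, ∏ k, P (ys k) = (∏ k, w (ys k)) * z^(∑ k, d (ys k)) := by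
    intro ys
    have : z^(∑ k, d (ys k)) = ∏ k, z^(d (ys k)) := by
      induction (Finset.univ : Finset (Fin n)) using Finset.induction_on with
      | empty => simp
      | insert a s ha ih => rw [Finset.sum_insert ha, Finset.prod_insert ha, zpow_add₀ hzne, ih]
    rw [this, ← Finset.prod_mul_distrib]
    refine Finset.prod_congr rfl fun k _ => ?_
    simp only [hw]
    rw [mul_assoc, ← zpow_add₀ hzne]; simp
  have s1 : ∑ ys : Fin n → Y, (∏ k, P (ys k)) * Vf (∑ k, d (ys k)) =
      ∑ ys : Fin n → Y, (∏ k, w (ys k)) * (z^(∑ k, d (ys k)) * Vf (∑ k, d (ys k))) :=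
    Finset.sum_congr rfl fun ys _ => by rw [hPw, mul_assoc]
  have s2 : ∑ ys : Fin n → Y, (∏ k, w (ys k)) * (z^(∑ k, d (ys k)) * Vf (∑ k, d (ys k))) =
      ∑ ys : Fin n → Y, (∏ k, w (ys k)) * (z^(-∑ k, d (ys k)) * Vf (-∑ k, d (ys k))) := by
    rw [← Equiv.sum_comp (Equiv.piCongrRight fun _ : Fin n => σ)]
    refine Finset.sum_congr rfl fun ys _ => ?_
    simp only [Equiv.piCongrRight_apply, Pi.map_apply, hwσ, hd, Finset.sum_neg_distrib]
  have s3 : 2 * ∑ ys : Fin n → Y, (∏ k, P (ys k)) * Vf (∑ k, d (ys k)) =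
      ∑ ys : Fin n → Y, (∏ k, w (ys k)) * z^(∑ k, d (ys k)).natAbs := by
    rw [two_mul]
    calc _ = ∑ ys : Fin n → Y, (∏ k, w (ys k)) * (z^(∑ k, d (ys k)) * Vf (∑ k, d (ys k))) + ∑ ys : Fin n → Y, (∏ k, w (ys k)) * (z^(-∑ k, d (ys k)) * Vf (-∑ k, d (ys k))) := by rw [← s2, ← s1]
      _ = _ := by
        rw [← Finset.sum_add_distrib]
        refine Finset.sum_congr rfl fun ys _ => ?_
        rw [← mul_add, Vf_sym z hz0]
  have hsin : ∀ t, ∑ y, w y * Real.sin (d y * t) = 0 := by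
    intro t
    have : ∑ y, w y * Real.sin (d y * t) = - ∑ y, w y * Real.sin (d y * t) := by
      nth_rewrite 1 [← Equiv.sum_comp σ]
      rw [← Finset.sum_neg_distrib]
      refine Finset.sum_congr rfl fun y _ => ?_
      rw [hwσ, hd]; push_cast; rw [neg_mul, Real.sin_neg]; ring
    linarith
  have hI : ∫ t in (-Real.pi)..Real.pi, (∑ y, w y * Real.cos (d y * t))^n * Hk z t =
      ∑ ys : Fin n → Y, (∏ k, w (ys k)) * (2 * Real.pi * z^(∑ k, d (ys k)).natAbs) := by
    have : ∀ t, (∑ y, w y * Real.cos (d y * t))^n * Hk z t =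
       ∑ ys : Fin n → Y, (∏ k, w (ys k)) * (Real.cos ((∑ k, d (ys k) : ℤ) * t) * Hk z t) := by
      intro t
      rw [← gen_cos w d t n (hsin t), Finset.sum_mul]
      exact Finset.sum_congr rfl fun ys _ => by ring
    simp only [this]
    rw [intervalIntegral.integral_finsetSum]
    · refine Finset.sum_congr rfl fun ys _ => ?_
      rw [intervalIntegral.integral_const_mul, int_cos_Hk z hz0 hz1]
    · intro ys _
      have := Hk_cont z hz0 hz1
      exact (by fun_prop : Continuous _).intervalIntegrable _ _
  rw [s3, hI, Finset.mul_sum]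
  refine Finset.sum_congr rfl fun ys _ => ?_
  have := Real.pi_pos
  field_simp

theorem sumY (g : (Fin 3 → Bool) → ℝ) : ∑ y, g y =
    g ![false,false,false] + g ![false,false,true] + g ![false,true,false] + g ![false,true,true] +
    g ![true,false,false] + g ![true,false,true] + g ![true,true,false] + g ![true,true,true] := by
  have : (Finset.univ : Finset (Fin 3 → Bool)) = {![false,false,false], ![false,false,true], ![false,true,false], ![false,true,true],
    ![true,false,false], ![true,false,true], ![true,true,false], ![true,true,true]} := by decide
  rw [this]
  repeat rw [Finset.sum_insert (by decide)]
  rw [Finset.sum_singleton]; ring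

theorem ising_eq (θ : ℝ) (x : Fin 3 → Bool) : isingP θ chainA x =
    1/2 * ((if x 0 = x 1 then 1 - θ else θ) * (if x 1 = x 2 then 1 - θ else θ)) := by
  unfold isingP
  have : chainA.edgeFinset = {s(0,1), s(1,2)} := by
    ext e
    rw [SimpleGraph.mem_edgeFinset, chainA, SimpleGraph.edgeSet_fromEdgeSet]
    simp only [Set.mem_sdiff, Set.mem_insert_iff, Set.mem_singleton_iff, Finset.mem_insert, Finset.mem_singleton]
    constructor
    · exact fun h => h.1
    · rintro (h | h) <;> subst h <;> simp
  rw [this, Finset.prod_insert (by decide), Finset.prod_singleton]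
  simp [pairWeight]

noncomputable def b0 (θ q : ℝ) : ℝ :=
  ((1 - q) ^ 3 + q ^ 3) * ((1-θ)^2 / 2) + q * (1 - q) * ((1 - (1-θ)^2) / 2)

noncomputable def PP (θ q : ℝ) (y : Fin 3 → Bool) : ℝ := noisy q (isingP θ chainA) y

theorem PP_eq (θ q : ℝ) (y : Fin 3 → Bool) : PP θ q y =
    if y 0 = y 1 then (if y 1 = y 2 then b0 θ q else beta1 θ q) else (if y 0 = y 2 then beta2 θ q else beta1 θ q) := by
  have hy : y = ![y 0, y 1, y 2] := by ext i; fin_cases i <;> rfl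
  rw [hy]
  unfold PP noisy
  rw [sumY]
  simp only [ising_eq]
  have hh : ∀ a b c a' b' c' : Bool, hamming ![a,b,c] ![a',b',c'] = (if a = a' then 0 else 1) + (if b = b' then 0 else 1) + (if c = c' then 0 else 1) := by
    intro a b c a' b' c'
    unfold hamming
    rw [Finset.card_filter, Fin.sum_univ_three]
    by_cases h1 : a = a' <;> by_cases h2 : b = b' <;> by_cases h3 : c = c' <;> simp [h1, h2, h3]
  simp only [hh]
  generalize y 0 = a
  generalize y 1 = b
  generalize y 2 = c
  unfold b0 beta1 beta2
  cases a <;> cases b <;> cases c <;> simp <;> ring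

def d3 (y : Fin 3 → Bool) : ℤ := (if y 0 = y 2 then 1 else 0) - (if y 0 = y 1 then 1 else 0)
def d1 (y : Fin 3 → Bool) : ℤ := (if y 0 = y 2 then 1 else 0) - (if y 1 = y 2 then 1 else 0)

def swp (i j : Fin 3) : (Fin 3 → Bool) ≃ (Fin 3 → Bool) := Equiv.arrowCongr (Equiv.swap i j) (Equiv.refl Bool)

theorem beta_facts (θ q : ℝ) (hθ0 : 0 < θ) (hθ1 : θ < 1 / 2) (hq0 : 0 ≤ q) (hq1 : q < 1 / 2) :
    0 < beta2 θ q ∧ beta2 θ q < beta1 θ q ∧ 0 < b0 θ q ∧ 2 * b0 θ q + 4 * beta1 θ q + 2 * beta2 θ q = 1 := by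
  have hc : 0 < (1 - q)^3 + q^3 := by
    have : 0 < 1 - q := by linarith
    positivity
  have hqq : 0 ≤ q * (1 - q) := mul_nonneg hq0 (by linarith)
  have h1θ : 0 < 1 - θ := by linarith
  refine ⟨?_, ?_, ?_, ?_⟩
  · unfold beta2
    have : 0 ≤ q * (1 - q) * ((1 - θ^2)/2) := mul_nonneg hqq (by nlinarith)
    positivity
  · unfold beta1 beta2
    have : ((1 - q) ^ 3 + q ^ 3) * (θ * (1 - θ) / 2) + q * (1 - q) * ((1 - θ * (1 - θ)) / 2) - (((1 - q) ^ 3 + q ^ 3) * (θ ^ 2 / 2) + q * (1 - q) * ((1 - θ ^ 2) / 2)) = (1 - 2*q)^2 * (θ * (1 - 2*θ)/2) := by ring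
    have h1 : 0 < (1 - 2*q) := by linarith
    have h2 : 0 < (1 - 2*θ) := by linarith
    have : 0 < (1 - 2*q)^2 * (θ * (1 - 2*θ)/2) := by positivity
    linarith
  · unfold b0
    have : 0 ≤ q * (1 - q) * ((1 - (1-θ)^2)/2) := mul_nonneg hqq (by nlinarith)
    positivity
  · unfold b0 beta1 beta2; ring

theorem PP_nonneg (θ q : ℝ) (hθ0 : 0 < θ) (hθ1 : θ < 1 / 2) (hq0 : 0 ≤ q) (hq1 : q < 1 / 2) (y : Fin 3 → Bool) : 0 ≤ PP θ q y := by
  obtain ⟨h2, h1, h0, -⟩ := beta_facts θ q hθ0 hθ1 hq0 hq1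
  rw [PP_eq]; split_ifs <;> linarith

theorem swp3 (y : Fin 3 → Bool) : swp 1 2 y = ![y 0, y 2, y 1] := by
  ext i; fin_cases i <;> rfl
theorem swp1 (y : Fin 3 → Bool) : swp 0 1 y = ![y 1, y 0, y 2] := by
  ext i; fin_cases i <;> rfl

theorem d3_swp (y : Fin 3 → Bool) : d3 (swp 1 2 y) = - d3 y := by
  rw [swp3]; simp only [d3, Matrix.cons_val_zero, Matrix.cons_val_one, Matrix.cons_val]
  generalize y 0 = a
  generalize y 1 = b
  generalize y 2 = c
  cases a <;> cases b <;> cases c <;> simp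
theorem d1_swp (y : Fin 3 → Bool) : d1 (swp 0 1 y) = - d1 y := by
  rw [swp1]; simp only [d1, Matrix.cons_val_zero, Matrix.cons_val_one, Matrix.cons_val]
  generalize y 0 = a
  generalize y 1 = b
  generalize y 2 = c
  cases a <;> cases b <;> cases c <;> simp

theorem P3_swp (θ q z : ℝ) (hz : 0 < z) (hb : beta2 θ q = z^2 * beta1 θ q) (y : Fin 3 → Bool) :
    PP θ q (swp 1 2 y) * z^(d3 y) = PP θ q y * z^(-d3 y) := by
  have := hz.ne'
  rw [swp3, PP_eq, PP_eq]
  unfold d3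
  simp only [Matrix.cons_val_zero, Matrix.cons_val_one, Matrix.cons_val]
  generalize y 0 = a
  generalize y 1 = b
  generalize y 2 = c
  cases a <;> cases b <;> cases c <;> simp [hb] <;> field_simp

theorem P1_swp (θ q z : ℝ) (hz : 0 < z) (hb : beta2 θ q = z^2 * beta1 θ q) (y : Fin 3 → Bool) :
    PP θ q (swp 0 1 y) * z^(d1 y) = PP θ q y * z^(-d1 y) := by
  have := hz.ne'
  rw [swp1, PP_eq, PP_eq]
  unfold d1
  simp only [Matrix.cons_val_zero, Matrix.cons_val_one, Matrix.cons_val]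
  generalize y 0 = a
  generalize y 1 = b
  generalize y 2 = c
  cases a <;> cases b <;> cases c <;> simp [hb] <;> field_simp

theorem S3 (θ q z t : ℝ) (hz : 0 < z) (hb : beta2 θ q = z^2 * beta1 θ q) :
    ∑ y, PP θ q y * z^(-d3 y) * Real.cos (d3 y * t) = 2 * b0 θ q + 2 * beta1 θ q + 4 * (z * beta1 θ q) * Real.cos t := by
  have := hz.ne'
  rw [sumY]; simp [PP_eq, d3, hb]; field_simp; ring

theorem S1 (θ q z t : ℝ) (hz : 0 < z) (hb : beta2 θ q = z^2 * beta1 θ q) :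
    ∑ y, PP θ q y * z^(-d1 y) * Real.cos (d1 y * t) = 2 * b0 θ q + 2 * beta1 θ q + 4 * (z * beta1 θ q) * Real.cos t := by
  have := hz.ne'
  rw [sumY]; simp [PP_eq, d1, hb]; field_simp; ring

theorem SM (θ q a b : ℝ) :
    ∑ y, PP θ q y * (a^(d1 y) * b^(d3 y)) = 2 * b0 θ q + 2 * beta2 θ q * (a * b) + 2 * beta1 θ q * a⁻¹ + 2 * beta1 θ q * b⁻¹ := by
  rw [sumY]; simp [PP_eq, d1, d3]; ring

theorem zpow_sum' {ι : Type*} (s : Finset ι) (a : ℝ) (ha : a ≠ 0) (d : ι → ℤ) : a^(∑ k ∈ s, d k) = ∏ k ∈ s, a^(d k) := by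
  induction s using Finset.induction_on with
  | empty => simp
  | insert i s hi ih => rw [Finset.sum_insert hi, Finset.prod_insert hi, zpow_add₀ ha, ih]

theorem joint (θ q a b : ℝ) (hP : ∀ y, 0 ≤ PP θ q y) (ha : 1 ≤ a) (hb : 1 ≤ b) (n : ℕ) :
    ∑ ys : Fin n → Fin 3 → Bool, (∏ k, PP θ q (ys k)) * (if 0 ≤ ∑ k, d1 (ys k) ∧ 0 ≤ ∑ k, d3 (ys k) then 1 else 0)
     ≤ (2 * b0 θ q + 2 * beta2 θ q * (a * b) + 2 * beta1 θ q * a⁻¹ + 2 * beta1 θ q * b⁻¹)^n := by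
  rw [← SM, Fintype.sum_pow]
  refine Finset.sum_le_sum fun ys _ => ?_
  rw [Finset.prod_mul_distrib, Finset.prod_mul_distrib, ← zpow_sum' _ _ (by linarith), ← zpow_sum' _ _ (by linarith)]
  have : 0 ≤ ∏ k, PP θ q (ys k) := Finset.prod_nonneg fun k _ => hP _
  gcongr
  split_ifs with h
  · exact one_le_mul_of_one_le_of_one_le (one_le_zpow₀ ha h.1) (one_le_zpow₀ hb h.2)
  · positivity

noncomputable def cij {n : ℕ} (ys : Fin n → Fin 3 → Bool) (i j : Fin 3) : ℤ := ∑ k, if ys k i = ys k j then 1 else 0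

theorem Ahat_eq {n : ℕ} (ys : Fin n → Fin 3 → Bool) (i j : Fin 3) : Ahat ys i j = (cij ys i j : ℝ) / n := by
  unfold Ahat cij
  congr 1
  rw [Finset.card_filter]; push_cast; rfl

theorem err_eq (θ q : ℝ) (n : ℕ) (hn : 1 ≤ n) : ∃ W : (Fin n → Fin 3 → Bool) → ℝ,
    ErrProbQ θ q n = ∑ ys, (∏ k, PP θ q (ys k)) * W ys ∧
    ∀ ys, |W ys - (Vf (∑ k, d1 (ys k)) + Vf (∑ k, d3 (ys k)))| ≤ 2 * (if 0 ≤ ∑ k, d1 (ys k) ∧ 0 ≤ ∑ k, d3 (ys k) then 1 else 0) := by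
  have hn0 : (0:ℝ) < n := by exact_mod_cast hn
  refine ⟨fun ys => (if cij ys 0 1 < cij ys 0 2 ∨ cij ys 1 2 < cij ys 0 2 then 1 else 0)
    + (1/2) * (if cij ys 0 1 < cij ys 1 2 ∧ cij ys 0 1 = cij ys 0 2 then 1 else 0)
    + (1/2) * (if cij ys 1 2 < cij ys 0 1 ∧ cij ys 1 2 = cij ys 0 2 then 1 else 0)
    + (2/3) * (if cij ys 0 1 = cij ys 1 2 ∧ cij ys 1 2 = cij ys 0 2 then 1 else 0), ?_, ?_⟩
  · have key : ∀ (A : Set (Fin n → Fin 3 → Bool)), iidProb (noisy q (isingP θ chainA)) n A = ∑ ys, (∏ k, PP θ q (ys k)) * (if ys ∈ A then 1 else 0) := by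
      intro A
      unfold iidProb
      refine Finset.sum_congr rfl fun ys _ => ?_
      by_cases h : ys ∈ A <;> simp [h, PP]
    have hlt : ∀ (ys : Fin n → Fin 3 → Bool) i j i' j', Ahat ys i j < Ahat ys i' j' ↔ cij ys i j < cij ys i' j' := by
      intro ys i j i' j'
      rw [Ahat_eq, Ahat_eq, div_lt_div_iff_of_pos_right hn0, Int.cast_lt]
    have heq : ∀ (ys : Fin n → Fin 3 → Bool) i j i' j', Ahat ys i j = Ahat ys i' j' ↔ cij ys i j = cij ys i' j' := by
      intro ys i j i' j'
      rw [Ahat_eq, Ahat_eq, div_left_inj' hn0.ne', Int.cast_inj]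
    unfold ErrProbQ
    simp only [key, Finset.mul_sum, ← Finset.sum_add_distrib]
    refine Finset.sum_congr rfl fun ys _ => ?_
    simp only [Set.mem_ofPred_eq, hlt, heq]
    ring
  · intro ys
    have e1 : ∑ k, d1 (ys k) = cij ys 0 2 - cij ys 1 2 := by
      simp only [d1, cij, Finset.sum_sub_distrib]
    have e3 : ∑ k, d3 (ys k) = cij ys 0 2 - cij ys 0 1 := by
      simp only [d3, cij, Finset.sum_sub_distrib]
    rw [e1, e3]
    dsimp only
    generalize cij ys 0 2 = x
    generalize cij ys 0 1 = y
    generalize cij ys 1 2 = w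
    unfold Vf
    simp only [sub_pos, sub_nonneg, sub_eq_zero]
    rcases lt_trichotomy x y with h | h | h <;> rcases lt_trichotomy x w with h' | h' | h'
    all_goals (split_ifs <;> first | (exfalso; omega) | norm_num)

theorem err_bound (θ q z : ℝ) (hθ0 : 0 < θ) (hθ1 : θ < 1 / 2) (hq0 : 0 ≤ q) (hq1 : q < 1 / 2)
    (hz0 : 0 < z) (hz1 : z < 1) (hb : beta2 θ q = z^2 * beta1 θ q) (ρ μ : ℝ)
    (hρ : ρ = 2 * b0 θ q + 2 * beta1 θ q + 4 * (z * beta1 θ q)) (hμ : ρ * μ = 4 * (z * beta1 θ q)) (n : ℕ) (hn : 1 ≤ n) :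
    |ErrProbQ θ q n - ρ^n * (1/(2*Real.pi) * ∫ t in (-Real.pi)..Real.pi, phi μ t ^ n * Hk z t)| ≤
      2 * (2 * b0 θ q + 4 * (√z * beta1 θ q) + 2 * (z * beta1 θ q))^n := by
  have hP := PP_nonneg θ q hθ0 hθ1 hq0 hq1
  have hsz : 0 < √z := Real.sqrt_pos.2 hz0
  have hsz2 : √z * √z = z := Real.mul_self_sqrt hz0.le
  have hsz1 : √z ≤ 1 := Real.sqrt_le_one.2 hz1.le
  obtain ⟨W, hW, hWb⟩ := err_eq θ q n hn
  have h3 := gen_EV (PP θ q) d3 (swp 1 2) z hz0 hz1 d3_swp (P3_swp θ q z hz0 hb) n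
  have h1 := gen_EV (PP θ q) d1 (swp 0 1) z hz0 hz1 d1_swp (P1_swp θ q z hz0 hb) n
  have hphi : ∀ t, 2 * b0 θ q + 2 * beta1 θ q + 4 * (z * beta1 θ q) * Real.cos t = ρ * phi μ t := by
    intro t; unfold phi
    linear_combination (1 - Real.cos t) * hμ - hρ
  simp only [S3 θ q z _ hz0 hb, hphi] at h3
  simp only [S1 θ q z _ hz0 hb, hphi] at h1
  simp only [mul_pow, mul_assoc] at h3 h1
  rw [intervalIntegral.integral_const_mul] at h1 h3
  have hsum : ρ^n * (1/(2*Real.pi) * ∫ t in (-Real.pi)..Real.pi, phi μ t ^ n * Hk z t) =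
      ∑ ys : Fin n → Fin 3 → Bool, (∏ k, PP θ q (ys k)) * (Vf (∑ k, d1 (ys k)) + Vf (∑ k, d3 (ys k))) := by
    simp only [mul_add, Finset.sum_add_distrib]
    linear_combination -(1/2) * h1 - (1/2) * h3
  rw [hW, hsum, ← Finset.sum_sub_distrib]
  have hj := joint θ q z⁻¹ (√z)⁻¹ hP ((one_le_inv₀ hz0).2 hz1.le) ((one_le_inv₀ hsz).2 hsz1) n
  have e : 2 * b0 θ q + 2 * beta2 θ q * (z⁻¹ * (√z)⁻¹) + 2 * beta1 θ q * z⁻¹⁻¹ + 2 * beta1 θ q * (√z)⁻¹⁻¹ =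
      2 * b0 θ q + 4 * (√z * beta1 θ q) + 2 * (z * beta1 θ q) := by
    have : z^2 * (z⁻¹ * (√z)⁻¹) = √z := by
      field_simp; rw [sq, hsz2]
    rw [hb, inv_inv, inv_inv]
    linear_combination 2 * beta1 θ q * this
  rw [e] at hj
  calc _ ≤ ∑ ys : Fin n → Fin 3 → Bool, (∏ k, PP θ q (ys k)) * (2 * (if 0 ≤ ∑ k, d1 (ys k) ∧ 0 ≤ ∑ k, d3 (ys k) then 1 else 0)) := by
        refine (Finset.abs_sum_le_sum_abs _ _).trans (Finset.sum_le_sum fun ys _ => ?_)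
        have : 0 ≤ ∏ k, PP θ q (ys k) := Finset.prod_nonneg fun k _ => hP _
        rw [← mul_sub, abs_mul, abs_of_nonneg this]
        exact mul_le_mul_of_nonneg_left (hWb ys) this
    _ = 2 * ∑ ys : Fin n → Fin 3 → Bool, (∏ k, PP θ q (ys k)) * (if 0 ≤ ∑ k, d1 (ys k) ∧ 0 ≤ ∑ k, d3 (ys k) then 1 else 0) := by
        rw [Finset.mul_sum]; exact Finset.sum_congr rfl fun ys _ => by ring
    _ ≤ _ := by linarith

theorem ratio_lim (E G : ℕ → ℝ) (h L : ℝ) (hh : h ≠ 0)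
    (hE : Tendsto (fun n : ℕ => (n:ℝ) * (E n - h)) atTop (nhds L))
    (hG : Tendsto (fun n : ℕ => (n:ℝ) * (G n - h)) atTop (nhds L)) :
    Tendsto (fun n : ℕ => (n:ℝ) * (E n / G n - 1)) atTop (nhds 0) := by
  have hG0 : Tendsto G atTop (nhds h) := by
    simpa using (lim_of_mul _ _ hG).add_const h
  have := (hE.sub hG).div hG0 hh
  rw [sub_self, zero_div] at this
  refine this.congr' ?_
  filter_upwards [hG0.eventually_ne hh] with n hn
  simp only [Pi.div_apply]
  field_simp
  ring

/-- exact asymptotics of the error probability of the tie-breaking MWST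
estimator with noisy samples: `Err_n^{(q)} = (2f^{(q)}(n) - f̃^{(q)}(n))(1 + o(n⁻¹))`. -/
theorem stmt19 (θ q : ℝ) (hθ0 : 0 < θ) (hθ1 : θ < 1 / 2) (hq0 : 0 ≤ q) (hq1 : q < 1 / 2) :
    Filter.Tendsto (fun n : ℕ =>
      (n : ℝ) * (ErrProbQ θ q n / (2 * fnq θ q n - ftildeq θ q n) - 1))
      Filter.atTop (nhds 0) := by
  obtain ⟨hb2, hb12, hb0, hsum⟩ := beta_facts θ q hθ0 hθ1 hq0 hq1
  have hb1 : 0 < beta1 θ q := hb2.trans hb12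
  have hz0 : 0 < zq θ q := Real.sqrt_pos.2 (div_pos hb2 hb1)
  have hzsq : zq θ q ^ 2 = beta2 θ q / beta1 θ q := Real.sq_sqrt (div_pos hb2 hb1).le
  have hb : beta2 θ q = zq θ q^2 * beta1 θ q := by rw [hzsq]; field_simp
  have hz1 : zq θ q < 1 := by
    have : zq θ q ^ 2 < 1 := by rw [hzsq, div_lt_one hb1]; exact hb12
    nlinarith
  have hsq : √(beta1 θ q * beta2 θ q) = zq θ q * beta1 θ q := by
    rw [hb, show beta1 θ q * (zq θ q^2 * beta1 θ q) = (zq θ q * beta1 θ q)^2 by ring]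
    exact Real.sqrt_sq (by positivity)
  obtain ⟨ρ, hρ⟩ : ∃ ρ, ρ = 2 * b0 θ q + 2 * beta1 θ q + 4 * (zq θ q * beta1 θ q) := ⟨_, rfl⟩
  have hρ0 : 0 < ρ := by rw [hρ]; positivity
  have hK : Kq θ q = - Real.log ρ := by
    unfold Kq
    rw [hsq]; congr 2; rw [hρ]; linarith
  have hμ : ρ * mu2 θ q = 4 * (zq θ q * beta1 θ q) := by
    unfold mu2
    rw [hsq, hK, Real.exp_neg, Real.exp_log hρ0]; field_simp
  have hexp : ∀ n : ℕ, Real.exp (-(n:ℝ) * Kq θ q) = ρ^n := by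
    intro n
    rw [hK, neg_mul_neg, Real.exp_nat_mul, Real.exp_log hρ0]
  have herr := err_bound θ q (zq θ q) hθ0 hθ1 hq0 hq1 hz0 hz1 hb ρ (mu2 θ q) hρ hμ
  have hμ0 : 0 < mu2 θ q := by
    have : 0 < ρ * mu2 θ q := by rw [hμ]; positivity
    exact (pos_iff_pos_of_mul_pos this).1 hρ0
  have hμ1 : mu2 θ q < 1 := by
    have : ρ * mu2 θ q < ρ * 1 := by rw [hμ, hρ]; linarith
    exact lt_of_mul_lt_mul_left this hρ0.le
  unfold fnq ftildeq
  simp only [hexp]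
  generalize mu2 θ q = μ at *
  generalize zq θ q = z at *
  have hJ := Jn_lim μ z hμ0 hμ1 hz0 hz1
  obtain ⟨M, hM⟩ : ∃ M, M = 2 * b0 θ q + 4 * (√z * beta1 θ q) + 2 * (z * beta1 θ q) := ⟨_, rfl⟩
  have hM0 : 0 < M := by rw [hM]; positivity
  have hsz1 : √z < 1 := by rw [Real.sqrt_lt' one_pos]; simpa using hz1
  have hsz2 : √z * √z = z := Real.mul_self_sqrt hz0.le
  have hMρ : M < ρ := by
    have : ρ - M = 2 * beta1 θ q * (1 - √z)^2 := by
      rw [hρ, hM]; linear_combination -2 * beta1 θ q * hsz2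
    have h1 : 0 < 1 - √z := by linarith
    have : 0 < 2 * beta1 θ q * (1 - √z)^2 := by positivity
    linarith
  rw [← hM] at herr
  generalize hErr : (fun n => ErrProbQ θ q n) = Err at *
  have hErr' : ∀ n, ErrProbQ θ q n = Err n := fun n => congrFun hErr n
  simp only [hErr'] at *
  clear hErr hErr'
  set I : ℕ → ℝ := fun n => ∫ t in (-Real.pi)..Real.pi, phi μ t ^ n * Hk z t with hI
  have hz1' : 1 - z ≠ 0 := by linarith
  have hpi := Real.pi_pos
  set C := √(2 * Real.pi * μ) with hC
  have hCpos : 0 < C := Real.sqrt_pos.2 (by positivity)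
  have hC2 : C * C = 2 * Real.pi * μ := Real.mul_self_sqrt (by positivity)
  have hCinv : √(2 * Real.pi / μ) = C / μ := by
    rw [show 2 * Real.pi / μ = (2 * Real.pi * μ) / (μ^2) by field_simp, Real.sqrt_div (by positivity), Real.sqrt_sq hμ0.le]
  have hE : Tendsto (fun n : ℕ => (n:ℝ) * (C * √(n:ℝ) * (Err n / ρ^n) - h0 z)) atTop
      (nhds (h0 z * (μ/24 - μ^2/8) * (3/μ^2) + h2 z * (1/μ))) := by
    have hr : Tendsto (fun n : ℕ => (n:ℝ) * (C * √(n:ℝ) * (Err n / ρ^n - 1/(2*Real.pi) * I n))) atTop (nhds 0) := by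
      rw [tendsto_zero_iff_norm_tendsto_zero]
      have hb : Tendsto (fun n : ℕ => 2 * C * ((n:ℝ)^2 * (M/ρ)^n)) atTop (nhds 0) := by
        have := (tendsto_pow_const_mul_const_pow_of_abs_lt_one 2 (r := M/ρ) (by
          rw [abs_of_pos (by positivity), div_lt_one hρ0]; exact hMρ)).const_mul (2 * C)
        simpa using this
      refine squeeze_zero' (Eventually.of_forall fun n => norm_nonneg _) ?_ hb
      filter_upwards [eventually_ge_atTop 1] with n hn
      have hn1 : (1:ℝ) ≤ n := by exact_mod_cast hn
      have hρn : 0 < ρ^n := by positivity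
      have hsn : √(n:ℝ) ≤ n := by
        rw [Real.sqrt_le_left (by linarith)]; nlinarith
      have e : Err n / ρ^n - 1/(2*Real.pi) * I n = (Err n - ρ^n * (1/(2*Real.pi) * I n)) / ρ^n := by
        field_simp
      rw [e, Real.norm_eq_abs, abs_mul, abs_mul, abs_div, abs_of_pos hρn, abs_of_nonneg (by positivity : (0:ℝ) ≤ n),
        abs_of_nonneg (by positivity : (0:ℝ) ≤ C * √(n:ℝ))]
      calc _ ≤ (n:ℝ) * (C * n * (2 * M^n / ρ^n)) := by
            gcongr
            exact herr n hn
        _ = _ := by rw [div_pow]; ring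
    have h2' := hr.add (hJ.const_mul (C/(2*Real.pi)))
    have e : 0 + C/(2*Real.pi) * ((h0 z * (μ/24 - μ^2/8) * (3/μ^2) + h2 z * (1/μ)) * √(2 * Real.pi / μ)) =
       (h0 z * (μ/24 - μ^2/8) * (3/μ^2) + h2 z * (1/μ)) := by
      have : C / (2 * Real.pi) * (C / μ) = 1 := by
        rw [div_mul_div_comm, hC2]; field_simp
      rw [hCinv]
      linear_combination (h0 z * (μ/24 - μ^2/8) * (3/μ^2) + h2 z * (1/μ)) * this
    rw [e] at h2'
    refine h2'.congr fun n => ?_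
    have : C / (2 * Real.pi) * (C / μ) = 1 := by
      rw [div_mul_div_comm, hC2]; field_simp
    rw [hCinv]
    linear_combination -(n:ℝ) * h0 z * this
  set G : ℕ → ℝ := fun n => (1 + (1 - 3 * μ) / (8 * μ * n)) * (2 / (1 - z) * (1 - z * (1 + z) / (2 * (1 - z)^2 * μ * n)) - 1) with hGd
  have hG : Tendsto (fun n : ℕ => (n:ℝ) * (G n - h0 z)) atTop
      (nhds (h0 z * (μ/24 - μ^2/8) * (3/μ^2) + h2 z * (1/μ))) := by
    have := (inv_nat_lim.const_mul ((1 - 3*μ)/(8*μ) * h2 z / μ)).add_const (h0 z * (μ/24 - μ^2/8) * (3/μ^2) + h2 z * (1/μ))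
    rw [mul_zero, zero_add] at this
    refine this.congr' ?_
    filter_upwards [eventually_ge_atTop 1] with n hn
    have hn1 : (n:ℝ) ≠ 0 := by have : 0 < n := hn
                               positivity
    simp only [hGd]
    unfold h0 h2
    field_simp
    ring
  refine (ratio_lim _ _ _ _ (h0_pos z hz0 hz1).ne' hE hG).congr' ?_
  filter_upwards [eventually_ge_atTop 1] with n hn
  have hn0 : (0:ℝ) < n := by exact_mod_cast hn
  have hρn : 0 < ρ^n := by positivity
  have hsn : 0 < √(n:ℝ) := Real.sqrt_pos.2 hn0
  rw [Real.sqrt_mul (by positivity : 0 ≤ 2 * Real.pi * μ), ← hC]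
  have e : 2 * (ρ ^ n / (C * √(n:ℝ)) * (1 + (1 - 3 * μ) / (8 * μ * n)) / (1 - z) * (1 - z * (1 + z) / (2 * (1 - z) ^ 2 * μ * n))) - ρ ^ n / (C * √(n:ℝ)) * (1 + (1 - 3 * μ) / (8 * μ * n)) = ρ^n / (C * √(n:ℝ)) * G n := by
    simp only [hGd]; ring
  rw [e]
  congr 2
  have hg : ∀ g a x y : ℝ, x ≠ 0 → a ≠ 0 → a * (y / x) / g = y / (x / a * g) := by
    intro g a x y hx ha
    rw [div_mul_eq_div_div y]
    congr 1
    field_simp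
  exact hg _ _ _ _ hρn.ne' (mul_pos hCpos hsn).ne'
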